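/- Let g be a pseudo-Riemannian metric and L a g-self-adjoint (1,1)-tensor field satisfying the compatibility equation ∇_u L = (1/2)(u⊗l + (u⊗l)^*) for all tangent vectors u, where ∇ is the Levi-Civita connection of g, l = d(tr L), and A^* is the g-adjoint of A. Then the Nijenhuis torsion of L vanishes: N_L = 0. -/

import Mathlib

open Matrix Polynomial Filter

noncomputable section

variable {ι : Type} [Fintype ι] [DecidableEq ι]

/-- Partial derivative of a real-valued function on `ι → ℝ` in the direction of the
`j`-th coordinate vector. -/
def pd (j : ι) (F : (ι → ℝ) → ℝ) (x : ι → ℝ) : ℝ :=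
  fderiv ℝ F x (Pi.single j 1)

/-- Christoffel symbols `Γ^i_{jk}` of a metric given in local coordinates as a
matrix-valued function. -/
def christoffel (g : (ι → ℝ) → Matrix ι ι ℝ) (x : ι → ℝ) (i j k : ι) : ℝ :=
  (1 / 2) * ∑ m, (g x)⁻¹ i m *
    (pd j (fun y => g y m k) x + pd k (fun y => g y m j) x - pd m (fun y => g y j k) x)

/-- A curve is a geodesic of `g` up to reparametrisation (an unparametrized geodesic):
`γ̈ + Γ(γ̇,γ̇) = α(t)·γ̇` for some function `α`. -/
def IsPregeodesic (g : (ι → ℝ) → Matrix ι ι ℝ) (γ : ℝ → ι → ℝ) : Prop :=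
  ∃ α : ℝ → ℝ, ∀ t : ℝ, ∀ i : ι,
    deriv (fun s => deriv (fun τ => γ τ i) s) t
      + ∑ j, ∑ k, christoffel g (γ t) i j k *
          deriv (fun τ => γ τ j) t * deriv (fun τ => γ τ k) t
      = α t * deriv (fun τ => γ τ i) t

/-- `g` is a pseudo-Riemannian metric (in local coordinates) on the set `U`. -/
structure IsMetricOn (g : (ι → ℝ) → Matrix ι ι ℝ) (U : Set (ι → ℝ)) : Prop where
  smooth : ∀ i j, ContDiffOn ℝ (⊤ : ℕ∞) (fun x => g x i j) U
  symm : ∀ x ∈ U, (g x)ᵀ = g x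
  nondeg : ∀ x ∈ U, IsUnit (g x).det

/-- Two metrics are geodesically equivalent on `U`: they have the same geodesics
considered as unparametrized curves. -/
def GeodEquiv (g gb : (ι → ℝ) → Matrix ι ι ℝ) (U : Set (ι → ℝ)) : Prop :=
  ∀ γ : ℝ → ι → ℝ, ContDiff ℝ (⊤ : ℕ∞) γ → (∀ t, γ t ∈ U) →
    (IsPregeodesic g γ ↔ IsPregeodesic gb γ)

/-- The (1,1)-tensor `L(g,ḡ)^i_j = (det ḡ / det g)^{1/(n+1)} ḡ^{ik} g_{kj}`. -/
def Lten (g gb : (ι → ℝ) → Matrix ι ι ℝ) (x : ι → ℝ) : Matrix ι ι ℝ :=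
  (((gb x).det / (g x).det) ^ ((1 : ℝ) / (Fintype.card ι + 1))) • ((gb x)⁻¹ * g x)

/-- An admissible factorisation `χ = χ₁·χ₂` of the characteristic polynomial of `L`:
both factors are monic of degree ≥ 1, have smooth coefficients, and have no common
complex root at any point of `U`. -/
structure AdmissibleFact (L : (ι → ℝ) → Matrix ι ι ℝ) (U : Set (ι → ℝ))
    (chi1 chi2 : (ι → ℝ) → Polynomial ℝ) : Prop where
  factor : ∀ x ∈ U, (L x).charpoly = chi1 x * chi2 x
  monic1 : ∀ x ∈ U, (chi1 x).Monic
  monic2 : ∀ x ∈ U, (chi2 x).Monic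
  deg1 : ∀ x ∈ U, 1 ≤ (chi1 x).natDegree
  deg2 : ∀ x ∈ U, 1 ≤ (chi2 x).natDegree
  smooth1 : ∀ k, ContDiffOn ℝ (⊤ : ℕ∞) (fun x => (chi1 x).coeff k) U
  smooth2 : ∀ k, ContDiffOn ℝ (⊤ : ℕ∞) (fun x => (chi2 x).coeff k) U
  coprime : ∀ x ∈ U, ¬ ∃ z : ℂ, aeval z (chi1 x) = 0 ∧ aeval z (chi2 x) = 0

/-- The distribution `D = ker χ(L)`. -/
def Dker (L : (ι → ℝ) → Matrix ι ι ℝ) (chi : (ι → ℝ) → Polynomial ℝ) (x : ι → ℝ) :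
    Submodule ℝ (ι → ℝ) :=
  LinearMap.ker (Matrix.mulVecLin (aeval (L x) (chi x)))

/-- A distribution on `U` is integrable (involutive, which is equivalent by the
Frobenius theorem): the Lie bracket of any two smooth vector fields tangent to the
distribution is again tangent to it. -/
def IsIntegrableDist (U : Set (ι → ℝ)) (D : (ι → ℝ) → Submodule ℝ (ι → ℝ)) : Prop :=
  ∀ u v : (ι → ℝ) → ι → ℝ, ContDiffOn ℝ (⊤ : ℕ∞) u U → ContDiffOn ℝ (⊤ : ℕ∞) v U →
    (∀ x ∈ U, u x ∈ D x) → (∀ x ∈ U, v x ∈ D x) →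
    ∀ x ∈ U, (fderiv ℝ v x (u x) - fderiv ℝ u x (v x)) ∈ D x

/-- The Lie derivative of the Christoffel symbols of `g` along a vector field `v`:
`(𝓛_v Γ)^i_{jk} = v^m ∂_m Γ^i_{jk} − (∂_m v^i) Γ^m_{jk} + (∂_j v^m) Γ^i_{mk}
  + (∂_k v^m) Γ^i_{jm} + ∂_j ∂_k v^i`. -/
def lieDerivGamma (g : (ι → ℝ) → Matrix ι ι ℝ) (v : (ι → ℝ) → ι → ℝ)
    (x : ι → ℝ) (i j k : ι) : ℝ :=
  (∑ m, v x m * pd m (fun y => christoffel g y i j k) x)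
  - (∑ m, pd m (fun y => v y i) x * christoffel g x m j k)
  + (∑ m, pd j (fun y => v y m) x * christoffel g x i m k)
  + (∑ m, pd k (fun y => v y m) x * christoffel g x i j m)
  + pd j (fun y => pd k (fun z => v z i) y) x

/-- `v` is a projective vector field for `g` on `U`: its local flow takes
unparametrized geodesics to geodesics; equivalently, the Lie derivative of the
Levi-Civita connection of `g` along `v` is of the projective form
`(𝓛_v Γ)^i_{jk} = δ^i_j φ_k + δ^i_k φ_j` for some 1-form `φ`. -/
def IsProjectiveVF (g : (ι → ℝ) → Matrix ι ι ℝ) (v : (ι → ℝ) → ι → ℝ)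
    (U : Set (ι → ℝ)) : Prop :=
  ContDiffOn ℝ (⊤ : ℕ∞) v U ∧
  ∃ φ : (ι → ℝ) → ι → ℝ, ∀ x ∈ U, ∀ i j k : ι,
    lieDerivGamma g v x i j k
      = (if i = j then φ x k else 0) + (if i = k then φ x j else 0)

/-- The Lie derivative of the metric `g` (a (0,2)-tensor) along `v`. -/
def lieDerivMetric (g : (ι → ℝ) → Matrix ι ι ℝ) (v : (ι → ℝ) → ι → ℝ)
    (x : ι → ℝ) : Matrix ι ι ℝ :=
  Matrix.of fun i j =>
    (∑ m, v x m * pd m (fun y => g y i j) x)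
    + (∑ m, g x m j * pd i (fun y => v y m) x)
    + (∑ m, g x i m * pd j (fun y => v y m) x)

/-- The covariant derivative `∇_r L^i_j` of a (1,1)-tensor w.r.t. the Levi-Civita
connection of `g`. -/
def covDerivT (g L : (ι → ℝ) → Matrix ι ι ℝ) (x : ι → ℝ) (r i j : ι) : ℝ :=
  pd r (fun y => L y i j) x
  + (∑ m, christoffel g x i r m * L x m j)
  - (∑ m, christoffel g x m r j * L x i m)

/-- `g` and `L` satisfy the compatibility equation (24):
`∇_r L^i_j = ½ (δ^i_r l_j + g^{is} l_s g_{rj})` with `l = d tr L`;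
equivalently `g` and `ḡ = (det L)⁻¹ g L⁻¹` are geodesically equivalent. -/
def Compatible (g L : (ι → ℝ) → Matrix ι ι ℝ) (U : Set (ι → ℝ)) : Prop :=
  ∀ x ∈ U, ∀ r i j : ι,
    covDerivT g L x r i j
      = (1 / 2) * ((if i = r then 1 else 0) * pd j (fun y => (L y).trace) x
          + (∑ s, (g x)⁻¹ i s * pd s (fun y => (L y).trace) x) * g x r j)

/-- The Lie bracket of two vector fields on `ι → ℝ`. -/
def vbracket (u v : (ι → ℝ) → ι → ℝ) (x : ι → ℝ) : ι → ℝ :=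
  fderiv ℝ v x (u x) - fderiv ℝ u x (v x)

/-- The vector field `Lu : x ↦ L(x)(u(x))`. -/
def appT (L : (ι → ℝ) → Matrix ι ι ℝ) (u : (ι → ℝ) → ι → ℝ) : (ι → ℝ) → ι → ℝ :=
  fun x => (L x).mulVec (u x)

/-- The Nijenhuis torsion `N_L(u,v) = L²[u,v] − L[Lu,v] − L[u,Lv] + [Lu,Lv]`. -/
def nijenhuis (L : (ι → ℝ) → Matrix ι ι ℝ) (u v : (ι → ℝ) → ι → ℝ)
    (x : ι → ℝ) : ι → ℝ :=
  (L x).mulVec ((L x).mulVec (vbracket u v x))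
  - (L x).mulVec (vbracket (appT L u) v x)
  - (L x).mulVec (vbracket u (appT L v) x)
  + vbracket (appT L u) (appT L v) x

/-- `N_L = 0` on `U`, tested against all smooth vector fields. -/
def NijenhuisZero (L : (ι → ℝ) → Matrix ι ι ℝ) (U : Set (ι → ℝ)) : Prop :=
  ∀ u v : (ι → ℝ) → ι → ℝ, ContDiff ℝ (⊤ : ℕ∞) u → ContDiff ℝ (⊤ : ℕ∞) v →
    ∀ x ∈ U, nijenhuis L u v x = 0

/-!
In the Nijenhuis torsion the derivatives of `u` and `v` cancel, leaving an expression in `L` and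
its first derivative. As the Levi-Civita connection is torsion-free, this derivative may be
replaced by `∇L`, so that `N_L(u,v) = (∇_{Lu} L) v − (∇_{Lv} L) u − L (∇_u L) v + L (∇_v L) u`.
Inserting `∇_w L = ½ (w ⊗ l + l^♯ ⊗ w^♭)`, the terms with `l` cancel at once, and those with `l^♯`
cancel by the symmetry of `g(Lu, v)` and `g(u, v)`.
-/

section Algebra

variable {n R : Type*} [Fintype n] [CommRing R]

/-- The pointwise Nijenhuis expression of an endomorphism `A` and a family `D`, where `D w` stands
for a derivative of the endomorphism field along `w`; both the coordinate derivative and a covariant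
derivative are inserted for `D`. -/
def algNijenhuis (A : Matrix n n R) (D : (n → R) → Matrix n n R) (u v : n → R) : n → R :=
  D (A *ᵥ u) *ᵥ v - D (A *ᵥ v) *ᵥ u - A *ᵥ (D u *ᵥ v) + A *ᵥ (D v *ᵥ u)

theorem algNijenhuis_add_lie (A : Matrix n n R) (D C : (n → R) → Matrix n n R)
    (hC : ∀ w z, C w *ᵥ z = C z *ᵥ w) (u v : n → R) :
    algNijenhuis A (fun w => D w + ⁅C w, A⁆) u v = algNijenhuis A D u v := by
  simp only [algNijenhuis, Ring.lie_def, add_mulVec, sub_mulVec, mulVec_add, mulVec_sub,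
    ← mulVec_mulVec]
  rw [hC (A *ᵥ v) (A *ᵥ u), hC (A *ᵥ u) v, hC (A *ᵥ v) u, hC v u]
  abel

theorem vecMul_dotProduct_comm {G : Matrix n n R} (hG : G.IsSymm) (u v : n → R) :
    (u ᵥ* G) ⬝ᵥ v = (v ᵥ* G) ⬝ᵥ u := by
  rw [← dotProduct_mulVec, dotProduct_comm, ← vecMul_transpose, hG.eq]

theorem vecMul_mulVec_eq_of_isSymm {G A : Matrix n n R} (hG : G.IsSymm) (hGA : (G * A).IsSymm)
    (u : n → R) : (A *ᵥ u) ᵥ* G = u ᵥ* (G * A) := by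
  rw [← hGA.eq, transpose_mul, hG.eq, ← vecMul_vecMul, vecMul_transpose]

theorem algNijenhuis_smul_vecMulVec_eq_zero {G A : Matrix n n R} (hG : G.IsSymm)
    (hGA : (G * A).IsSymm) (c : R) (l s u v : n → R) :
    algNijenhuis A (fun w => c • (vecMulVec w l + vecMulVec s (w ᵥ* G))) u v = 0 := by
  simp only [algNijenhuis, smul_mulVec, add_mulVec, vecMulVec_mulVec, op_smul_eq_smul, mulVec_smul,
    mulVec_add, vecMul_mulVec_eq_of_isSymm hG hGA]
  rw [vecMul_dotProduct_comm hGA v u, vecMul_dotProduct_comm hG v u]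
  module

end Algebra

section Derivative

variable {E m n : Type*} [NormedAddCommGroup E] [NormedSpace ℝ E] [Fintype n]

/-- The derivative at `x` along `w` of a matrix-valued function. It is taken entrywise, since
matrices carry no global norm. -/
def matDeriv (L : E → Matrix m n ℝ) (x w : E) : Matrix m n ℝ :=
  of fun i j => fderiv ℝ (fun y => L y i j) x w

theorem fderiv_mulVec {L : E → Matrix m n ℝ} {u : E → n → ℝ} {x : E}
    (hL : ∀ i j, DifferentiableAt ℝ (fun y => L y i j) x) (hu : DifferentiableAt ℝ u x) (w : E) :
    fderiv ℝ (fun y => L y *ᵥ u y) x w = matDeriv L x w *ᵥ u x + L x *ᵥ fderiv ℝ u x w := by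
  have hrow (i : m) : HasFDerivAt (fun y => (L y *ᵥ u y) i)
      (∑ j, (L x i j • (ContinuousLinearMap.proj j).comp (fderiv ℝ u x)
        + u x j • fderiv ℝ (fun y => L y i j) x)) x :=
    HasFDerivAt.fun_sum fun j _ =>
      (hL i j).hasFDerivAt.mul (hasFDerivAt_pi'.1 hu.hasFDerivAt j)
  ext i
  rw [(hasFDerivAt_pi.2 hrow).fderiv]
  simp [matDeriv, mulVec, dotProduct, Finset.sum_add_distrib, add_comm, mul_comm]

theorem nijenhuis_eq_algNijenhuis_matDeriv {n : Type} [Fintype n] {L : (n → ℝ) → Matrix n n ℝ}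
    {u v : (n → ℝ) → n → ℝ} {x : n → ℝ} (hL : ∀ i j, DifferentiableAt ℝ (fun y => L y i j) x)
    (hu : DifferentiableAt ℝ u x) (hv : DifferentiableAt ℝ v x) :
    nijenhuis L u v x = algNijenhuis (L x) (matDeriv L x) (u x) (v x) := by
  have hLu (w : n → ℝ) : fderiv ℝ (appT L u) x w = _ := fderiv_mulVec hL hu w
  have hLv (w : n → ℝ) : fderiv ℝ (appT L v) x w = _ := fderiv_mulVec hL hv w
  simp only [nijenhuis, algNijenhuis, vbracket, hLu, hLv, mulVec_sub, mulVec_add]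
  simp only [appT]
  abel

end Derivative

section Connection

/-- The connection matrix `Γ(w)^i_m = w^r Γ^i_{rm}` of the Levi-Civita connection of `g`. -/
def connMatrix (g : (ι → ℝ) → Matrix ι ι ℝ) (x w : ι → ℝ) : Matrix ι ι ℝ :=
  of fun i m => ∑ r, w r * christoffel g x i r m

/-- The covariant derivative `∇_w L` along a vector `w`, the contraction of `covDerivT` with `w`. -/
def covDeriv (g L : (ι → ℝ) → Matrix ι ι ℝ) (x w : ι → ℝ) : Matrix ι ι ℝ :=
  of fun i j => ∑ r, w r * covDerivT g L x r i j

/-- The components `l_j = ∂_j tr L` of the 1-form `l = d(tr L)`. -/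
def traceDeriv (L : (ι → ℝ) → Matrix ι ι ℝ) (x : ι → ℝ) : ι → ℝ :=
  fun j => pd j (fun y => (L y).trace) x

theorem fderiv_apply_eq_sum_pd (F : (ι → ℝ) → ℝ) (x w : ι → ℝ) :
    fderiv ℝ F x w = ∑ r, w r * pd r F x := by
  conv_lhs => rw [pi_eq_sum_univ' w]
  simp only [pd, map_sum, map_smul, smul_eq_mul]

theorem christoffel_symm {g : (ι → ℝ) → Matrix ι ι ℝ} {x : ι → ℝ}
    (hg : ∀ᶠ y in nhds x, (g y).IsSymm) (i j k : ι) :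
    christoffel g x i j k = christoffel g x i k j := by
  have hjk (m : ι) : pd m (fun y => g y j k) x = pd m (fun y => g y k j) x := by
    have hev : (fun y => g y j k) =ᶠ[nhds x] fun y => g y k j :=
      hg.mono fun y hy => hy.apply k j
    rw [pd, pd, hev.fderiv_eq]
  simp only [christoffel, hjk, add_comm (pd j _ x)]

theorem connMatrix_mulVec_comm {g : (ι → ℝ) → Matrix ι ι ℝ} {x : ι → ℝ}
    (hg : ∀ᶠ y in nhds x, (g y).IsSymm) (w v : ι → ℝ) :
    connMatrix g x w *ᵥ v = connMatrix g x v *ᵥ w := by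
  ext i
  simp only [connMatrix, mulVec, dotProduct, of_apply, Finset.sum_mul]
  rw [Finset.sum_comm]
  refine Finset.sum_congr rfl fun r _ => Finset.sum_congr rfl fun m _ => ?_
  rw [christoffel_symm hg i r m]
  ring

theorem covDeriv_eq_matDeriv_add_lie (g L : (ι → ℝ) → Matrix ι ι ℝ) (x w : ι → ℝ) :
    covDeriv g L x w = matDeriv L x w + ⁅connMatrix g x w, L x⁆ := by
  ext i j
  have hleft : (connMatrix g x w * L x) i j
      = ∑ r, w r * ∑ m, christoffel g x i r m * L x m j := by
    simp only [connMatrix, mul_apply, of_apply, Finset.sum_mul, Finset.mul_sum, mul_assoc]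
    exact Finset.sum_comm
  have hright : (L x * connMatrix g x w) i j
      = ∑ r, w r * ∑ m, christoffel g x m r j * L x i m := by
    simp only [connMatrix, mul_apply, of_apply, Finset.mul_sum]
    rw [Finset.sum_comm]
    exact Finset.sum_congr rfl fun r _ => Finset.sum_congr rfl fun m _ => by ring
  simp only [Ring.lie_def, Matrix.add_apply, Matrix.sub_apply, hleft, hright, covDeriv, covDerivT,
    matDeriv, of_apply, fderiv_apply_eq_sum_pd, mul_add, mul_sub, Finset.sum_add_distrib,
    Finset.sum_sub_distrib]
  ring

theorem nijenhuis_eq_algNijenhuis_covDeriv {g L : (ι → ℝ) → Matrix ι ι ℝ}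
    {u v : (ι → ℝ) → ι → ℝ} {x : ι → ℝ} (hg : ∀ᶠ y in nhds x, (g y).IsSymm)
    (hL : ∀ i j, DifferentiableAt ℝ (fun y => L y i j) x)
    (hu : DifferentiableAt ℝ u x) (hv : DifferentiableAt ℝ v x) :
    nijenhuis L u v x = algNijenhuis (L x) (covDeriv g L x) (u x) (v x) := by
  rw [nijenhuis_eq_algNijenhuis_matDeriv hL hu hv, funext (covDeriv_eq_matDeriv_add_lie g L x),
    algNijenhuis_add_lie _ _ _ (connMatrix_mulVec_comm hg)]

theorem Compatible.covDeriv_eq {g L : (ι → ℝ) → Matrix ι ι ℝ} {U : Set (ι → ℝ)}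
    (h : Compatible g L U) {x : ι → ℝ} (hx : x ∈ U) (w : ι → ℝ) :
    covDeriv g L x w = (1 / 2 : ℝ) • (vecMulVec w (traceDeriv L x)
      + vecMulVec ((g x)⁻¹ *ᵥ traceDeriv L x) (w ᵥ* g x)) := by
  ext i j
  let s : ι → ℝ := (g x)⁻¹ *ᵥ traceDeriv L x
  calc ∑ r, w r * covDerivT g L x r i j
      = ∑ r, w r * ((1 / 2) * ((if i = r then 1 else 0) * traceDeriv L x j + s i * g x r j)) :=
        Finset.sum_congr rfl fun r _ => congrArg (w r * ·) (h x hx r i j)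
    _ = (1 / 2) * ((∑ r, w r * if i = r then 1 else 0) * traceDeriv L x j
          + s i * ∑ r, w r * g x r j) := by
        simp only [Finset.sum_mul, Finset.mul_sum, ← Finset.sum_add_distrib]
        exact Finset.sum_congr rfl fun r _ => by ring
    _ = (1 / 2) * (w i * traceDeriv L x j + s i * ∑ r, w r * g x r j) := by
        simp only [mul_ite, mul_one, mul_zero, Finset.sum_ite_eq, Finset.mem_univ, if_true]

end Connection

theorem stmt12_general {U : Set (ι → ℝ)} (hU : IsOpen U) {g L : (ι → ℝ) → Matrix ι ι ℝ}
    (hg : IsMetricOn g U) (hL : ∀ i j, DifferentiableOn ℝ (fun x => L x i j) U)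
    (hLsa : ∀ x ∈ U, (g x * L x).IsSymm) (hLcomp : Compatible g L U)
    {u v : (ι → ℝ) → ι → ℝ} {x : ι → ℝ} (hx : x ∈ U)
    (hu : DifferentiableAt ℝ u x) (hv : DifferentiableAt ℝ v x) :
    nijenhuis L u v x = 0 := by
  have hUx : U ∈ nhds x := hU.mem_nhds hx
  calc nijenhuis L u v x
      = algNijenhuis (L x) (covDeriv g L x) (u x) (v x) :=
        nijenhuis_eq_algNijenhuis_covDeriv (Filter.mem_of_superset hUx hg.symm)
          (fun i j => (hL i j).differentiableAt hUx) hu hv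
    _ = algNijenhuis (L x) (fun w => (1 / 2 : ℝ) • (vecMulVec w (traceDeriv L x)
          + vecMulVec ((g x)⁻¹ *ᵥ traceDeriv L x) (w ᵥ* g x))) (u x) (v x) := by
        rw [funext (hLcomp.covDeriv_eq hx)]
    _ = 0 := algNijenhuis_smul_vecMulVec_eq_zero (hg.symm x hx) (hLsa x hx) _ _ _ _ _

theorem stmt12 {n : ℕ} (U : Set (Fin n → ℝ)) (hU : IsOpen U)
    (g : (Fin n → ℝ) → Matrix (Fin n) (Fin n) ℝ) (hg : IsMetricOn g U)
    (L : (Fin n → ℝ) → Matrix (Fin n) (Fin n) ℝ)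
    (hLsmooth : ∀ i j, ContDiffOn ℝ (⊤ : ℕ∞) (fun x => L x i j) U)
    -- `L` is `g`-self-adjoint
    (hLsa : ∀ x ∈ U, (g x * L x)ᵀ = g x * L x)
    -- `g` and `L` satisfy the compatibility equation
    (hLcomp : Compatible g L U) :
    -- then the Nijenhuis torsion of `L` vanishes
    NijenhuisZero L U :=
  fun _ _ hu hv _ hx => stmt12_general hU hg (fun i j => (hLsmooth i j).differentiableOn (by simp))
    hLsa hLcomp hx (hu.differentiable (by simp) _) (hv.differentiable (by simp) _)
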